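/- Let ν ≥ 1 be an integer and (M_k)_{k∈ℕ} a sequence of positive reals satisfying (M.0) and (G), with associated function M(r) := sup_{k∈ℕ} log(r^{νk}/M_{νk}). Let (λ_j)_{j≥1} be positive reals with λ_j ≥ λ₁ > 0 for all j and ∑_{j≥1} λ_j^{−p₀} < ∞ for some p₀ ∈ ℕ. Then for every δ > 0 and L > 0 the series ∑_{j≥1} exp(−δ·M(L·λ_j^{1/ν})) converges. -/

import Mathlib

/-- The associated function `M(r) = sup_{k ∈ ℕ} log ( r^{νk} / M_{νk} )`. -/
noncomputable def assocM (ν : ℕ) (Mk : ℕ → ℝ) (r : ℝ) : ℝ :=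
  ⨆ k : ℕ, Real.log (r ^ (ν * k) / Mk (ν * k))

/-!
A single term of the supremum gives `r ^ (ν * k) / M_{νk} ≤ exp (M r)`, so `exp (-δ * M r)` decays
at least like `r ^ (-(δ * ν * k))`. As `k` is arbitrary, this beats every power of `r`, in
particular the power for which the series of the `λ_j` is assumed to converge.
-/

open Asymptotics Filter Set

theorem pow_div_le_mul_exp_of_factorial_le {C l m r : ℝ} {k : ℕ} (hl : 0 < l) (hm : 0 < m)
    (hr : 0 ≤ r) (hk : (k.factorial : ℝ) ≤ C * l ^ k * m) :
    r ^ k / m ≤ C * Real.exp (l * r) := by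
  have hexp : (l * r) ^ k ≤ Real.exp (l * r) * k.factorial :=
    (div_le_iff₀ (by positivity)).1 (Real.pow_div_factorial_le_exp (l * r) (by positivity) k)
  rw [div_le_iff₀ hm]
  refine le_of_mul_le_mul_left ?_ (pow_pos hl k)
  calc
    l ^ k * r ^ k = (l * r) ^ k := (mul_pow l r k).symm
    _ ≤ Real.exp (l * r) * k.factorial := hexp
    _ ≤ Real.exp (l * r) * (C * l ^ k * m) := by gcongr
    _ = l ^ k * (C * Real.exp (l * r) * m) := by ring

theorem tendsto_cofinite_atTop_of_summable_rpow_neg {ι : Type*} {x : ι → ℝ} {p : ℝ} (hp : 0 ≤ p)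
    (hx : ∀ i, 0 < x i) (hsum : Summable fun i => x i ^ (-p)) : Tendsto x cofinite atTop := by
  refine tendsto_atTop.2 fun b => ?_
  have hb : 0 < max b 1 := by positivity
  filter_upwards [hsum.tendsto_cofinite_zero.eventually_lt_const (Real.rpow_pos_of_pos hb (-p))]
    with i hi
  refine (le_max_left b 1).trans ?_
  by_contra! hlt
  exact hi.not_ge (Real.rpow_le_rpow_of_nonpos (hx i) hlt.le (neg_nonpos.2 hp))

section AssociatedFunction

variable {ν : ℕ} {Mk : ℕ → ℝ}

theorem bddAbove_range_log_pow_div_of_factorial_le {C l r : ℝ} (hMpos : ∀ k, 0 < Mk k)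
    (hl : 0 < l) (hG : ∀ k : ℕ, (k.factorial : ℝ) ≤ C * l ^ k * Mk k) (hr : 0 < r) :
    BddAbove (range fun k : ℕ => Real.log (r ^ (ν * k) / Mk (ν * k))) := by
  refine ⟨Real.log (C * Real.exp (l * r)), forall_mem_range.2 fun k => ?_⟩
  have hM := hMpos (ν * k)
  exact Real.log_le_log (by positivity)
    (pow_div_le_mul_exp_of_factorial_le hl hM hr.le (hG (ν * k)))

theorem exp_neg_mul_assocM_le {δ r : ℝ} {k : ℕ} (hδ : 0 ≤ δ) (hr : 0 < r) (hM : 0 < Mk (ν * k))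
    (hfin : BddAbove (range fun n : ℕ => Real.log (r ^ (ν * n) / Mk (ν * n)))) :
    Real.exp (-(δ * assocM ν Mk r)) ≤ Mk (ν * k) ^ δ * r ^ (-(δ * (ν * k : ℕ))) := by
  have hterm : Real.log (r ^ (ν * k) / Mk (ν * k)) ≤ assocM ν Mk r := le_ciSup hfin k
  calc
    Real.exp (-(δ * assocM ν Mk r))
        ≤ Real.exp (-(δ * Real.log (r ^ (ν * k) / Mk (ν * k)))) := by gcongr
    _ = (r ^ (ν * k) / Mk (ν * k)) ^ (-δ) := by
      rw [Real.rpow_def_of_pos (by positivity), mul_neg, mul_comm]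
    _ = Mk (ν * k) ^ δ * r ^ (-(δ * (ν * k : ℕ))) := by
      rw [Real.div_rpow (by positivity) hM.le, ← Real.rpow_natCast_mul hr.le,
        Real.rpow_neg hM.le, div_inv_eq_mul, mul_neg, mul_comm δ, mul_comm]

theorem isBigO_exp_neg_mul_assocM_rpow_neg {δ : ℝ} (hν : 1 ≤ ν) (hMpos : ∀ k, 0 < Mk k)
    (hfin : ∀ r : ℝ, 0 < r → BddAbove (range fun k : ℕ => Real.log (r ^ (ν * k) / Mk (ν * k))))
    (hδ : 0 < δ) (s : ℝ) :
    (fun r => Real.exp (-(δ * assocM ν Mk r))) =O[atTop] fun r : ℝ => r ^ (-s) := by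
  obtain ⟨k, hk⟩ := exists_nat_ge (s / δ)
  have hs : s ≤ δ * (ν * k : ℕ) := by
    rw [← div_le_iff₀' hδ]
    exact hk.trans (Nat.cast_le.2 (Nat.le_mul_of_pos_left k hν))
  refine IsBigO.of_bound (Mk (ν * k) ^ δ) ?_
  filter_upwards [eventually_ge_atTop 1] with r hr
  have hr₀ : 0 < r := by positivity
  have hM := hMpos (ν * k)
  rw [Real.norm_of_nonneg (Real.exp_pos _).le, Real.norm_of_nonneg (by positivity)]
  calc
    Real.exp (-(δ * assocM ν Mk r)) ≤ Mk (ν * k) ^ δ * r ^ (-(δ * (ν * k : ℕ))) :=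
      exp_neg_mul_assocM_le hδ.le hr₀ hM (hfin r hr₀)
    _ ≤ Mk (ν * k) ^ δ * r ^ (-s) := by gcongr

theorem stmt_12_general {ι : Type*} {lam : ι → ℝ} {p a δ L : ℝ} (hν : 1 ≤ ν)
    (hMpos : ∀ k, 0 < Mk k)
    (hfin : ∀ r : ℝ, 0 < r → BddAbove (range fun k : ℕ => Real.log (r ^ (ν * k) / Mk (ν * k))))
    (hlam : ∀ j, 0 < lam j) (hp : 0 ≤ p) (hsum : Summable fun j => lam j ^ (-p))
    (ha : 0 < a) (hδ : 0 < δ) (hL : 0 < L) :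
    Summable fun j => Real.exp (-(δ * assocM ν Mk (L * lam j ^ a))) := by
  have hlim : Tendsto (fun j => L * lam j ^ a) cofinite atTop :=
    ((tendsto_rpow_atTop ha).comp
      (tendsto_cofinite_atTop_of_summable_rpow_neg hp hlam hsum)).const_mul_atTop hL
  have hpow (j : ι) : (L * lam j ^ a) ^ (-(p / a)) = L ^ (-(p / a)) * lam j ^ (-p) := by
    have hj := hlam j
    rw [Real.mul_rpow hL.le (by positivity), ← Real.rpow_mul hj.le, mul_neg,
      mul_div_cancel₀ p ha.ne']
  have hsum' : Summable fun j => (L * lam j ^ a) ^ (-(p / a)) := by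
    simpa only [hpow] using hsum.mul_left (L ^ (-(p / a)))
  exact summable_of_isBigO hsum'
    ((isBigO_exp_neg_mul_assocM_rpow_neg hν hMpos hfin hδ (p / a)).comp_tendsto hlim)

end AssociatedFunction

theorem stmt_12 (ν : ℕ) (hν : 1 ≤ ν) (Mk : ℕ → ℝ) (hMpos : ∀ k, 0 < Mk k)
    (hM0 : Mk 0 = 1)
    (hG : ∃ C₀ > (0 : ℝ), ∃ l > (0 : ℝ), ∀ k : ℕ, (k.factorial : ℝ) ≤ C₀ * l ^ k * Mk k)
    (lam : ℕ → ℝ) (hlam : ∀ j, 0 < lam j) (hlb : ∀ j, lam 0 ≤ lam j)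
    (p₀ : ℕ) (hp₀ : Summable (fun j => 1 / lam j ^ p₀)) :
    ∀ δ : ℝ, 0 < δ → ∀ L : ℝ, 0 < L →
      Summable (fun j => Real.exp (-(δ * assocM ν Mk (L * lam j ^ (1 / (ν : ℝ)))))) := by
  intro δ hδ L hL
  obtain ⟨C₀, -, l, hl, hG⟩ := hG
  have hsum : Summable fun j => lam j ^ (-(p₀ : ℝ)) := by
    simpa only [Real.rpow_neg (hlam _).le, Real.rpow_natCast, one_div] using hp₀
  exact stmt_12_general hν hMpos
    (fun r hr => bddAbove_range_log_pow_div_of_factorial_le hMpos hl hG hr)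
    hlam p₀.cast_nonneg hsum (by positivity) hδ hL
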